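/- There is no separable complex Banach algebra B such that every separable complex Banach algebra A admits a bounded homomorphic embedding into B; that is, for every separable Banach algebra B there exists a separable Banach algebra A such that no injective bounded algebra homomorphism φ : A → B is bounded below (i.e., there is no c > 0 with c‖a‖ ≤ ‖φ(a)‖ for all a). Moreover, such an A can be chosen commutative. -/

import Mathlib

/-- A bundled separable complex Banach algebra: a complete normed (not
necessarily unital, not necessarily commutative) ring which is a normed space
over `ℂ` whose multiplication is `ℂ`-bilinear, and whose underlying metric
space is separable. -/
structure SepBanachAlgebra : Type 1 where
  carrier : Type
  [ring : NonUnitalNormedRing carrier]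
  [normedSpace : NormedSpace ℂ carrier]
  [tower : IsScalarTower ℂ carrier carrier]
  [smulComm : SMulCommClass ℂ carrier carrier]
  [complete : CompleteSpace carrier]
  [separable : TopologicalSpace.SeparableSpace carrier]

attribute [instance] SepBanachAlgebra.ring SepBanachAlgebra.normedSpace
  SepBanachAlgebra.tower SepBanachAlgebra.smulComm
  SepBanachAlgebra.complete SepBanachAlgebra.separable

section partA

/-- Build a separable Banach algebra out of a contractive associative bilinear map. -/
noncomputable def mkAlg (E : Type) [NormedAddCommGroup E] [NormedSpace ℂ E] [CompleteSpace E]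
    [TopologicalSpace.SeparableSpace E] (m : E →ₗ[ℂ] E →ₗ[ℂ] E)
    (hassoc : ∀ x y z, m (m x y) z = m x (m y z)) (hn : ∀ x y, ‖m x y‖ ≤ ‖x‖ * ‖y‖) :
    SepBanachAlgebra :=
  letI r : NonUnitalNormedRing E :=
    { (inferInstance : NormedAddCommGroup E) with
      mul := fun x y => m x y
      left_distrib := fun x y z => (m x).map_add y z
      right_distrib := fun x y z => by
        change m (x + y) z = m x z + m y z
        simp
      zero_mul := fun x => by
        change m 0 x = 0
        simp
      mul_zero := fun x => (m x).map_zero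
      mul_assoc := hassoc
      norm_mul_le := hn }
  { carrier := E
    ring := r
    normedSpace := { (inferInstance : NormedSpace ℂ E) with }
    tower := ⟨fun c x y => by
      change m (c • x) y = c • m x y
      simp⟩
    smulComm := ⟨fun c x y => by
      change c • m x y = m x (c • y)
      simp⟩
    complete := (inferInstance : CompleteSpace E)
    separable := (inferInstance : TopologicalSpace.SeparableSpace E) }

lemma mkAlg_exists (E : Type) [NormedAddCommGroup E] [NormedSpace ℂ E] [CompleteSpace E]
    [TopologicalSpace.SeparableSpace E] (m : E →ₗ[ℂ] E →ₗ[ℂ] E)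
    (hassoc : ∀ x y z, m (m x y) z = m x (m y z)) (hn : ∀ x y, ‖m x y‖ ≤ ‖x‖ * ‖y‖) :
    ∃ (A : SepBanachAlgebra) (e : E ≃ₗ[ℂ] A.carrier), (∀ x, ‖e x‖ = ‖x‖) ∧
      ∀ x y, e x * e y = e (m x y) :=
  ⟨mkAlg E m hassoc hn, 
    { toFun := fun x => x
      map_add' := fun _ _ => rfl
      map_smul' := fun _ _ => rfl
      invFun := fun x => x
      left_inv := fun _ => rfl
      right_inv := fun _ => rfl }, fun _ => rfl, fun _ _ => rfl⟩

/-- The underlying space of the algebra. -/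
abbrev EE (X X' Y Y' : Type) : Type := ℂ × X' × Y × X × Y' × ℂ × ℂ

lemma algA_aux {X X' Y Y' : Type}
    [NormedAddCommGroup X] [NormedSpace ℂ X] [CompleteSpace X] [TopologicalSpace.SeparableSpace X]
    [NormedAddCommGroup X'] [NormedSpace ℂ X'] [CompleteSpace X']
    [TopologicalSpace.SeparableSpace X']
    [NormedAddCommGroup Y] [NormedSpace ℂ Y] [CompleteSpace Y] [TopologicalSpace.SeparableSpace Y]
    [NormedAddCommGroup Y'] [NormedSpace ℂ Y'] [CompleteSpace Y']
    [TopologicalSpace.SeparableSpace Y']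
    (i : X' →ₗ[ℂ] X) (k : Y →ₗ[ℂ] Y') (P : X →ₗ[ℂ] Y →ₗ[ℂ] ℂ) (P' : X' →ₗ[ℂ] Y' →ₗ[ℂ] ℂ)
    (hi : ∀ x, ‖i x‖ ≤ ‖x‖) (hk : ∀ y, ‖k y‖ ≤ ‖y‖) (hP : ∀ x y, ‖P x y‖ ≤ ‖x‖ * ‖y‖)
    (hP' : ∀ x y, ‖P' x y‖ ≤ ‖x‖ * ‖y‖) (hc : ∀ x y, P (i x) y = P' x (k y)) :
    ∃ A : SepBanachAlgebra, (∀ a b : A.carrier, a * b = b * a) ∧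
      ∃ (p w : A.carrier) (jX : X →ₗ[ℂ] A.carrier) (jX' : X' →ₗ[ℂ] A.carrier)
        (jY : Y →ₗ[ℂ] A.carrier), w ≠ 0 ∧ (∀ x, ‖jX x‖ ≤ ‖x‖) ∧ (∀ x, ‖jX' x‖ ≤ ‖x‖) ∧
        (∀ x, ‖jY x‖ ≤ ‖x‖) ∧ (∀ x, p * jX' x = jX (i x)) ∧ (∀ x y, jX x * jY y = P x y • w) ∧
        (∀ y, k y = 0 → p * jY y = 0) := by
  let m0 : (EE X X' Y Y') → (EE X X' Y Y') → (EE X X' Y Y') := fun a b => (6⁻¹ : ℂ) • ((0, 0, 0, a.1 • i b.2.1 + b.1 • i a.2.1,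
    a.1 • k b.2.2.1 + b.1 • k a.2.2.1, P (i a.2.1) b.2.2.1 + P (i b.2.1) a.2.2.1,
    P a.2.2.2.1 b.2.2.1 + P b.2.2.2.1 a.2.2.1 + P' a.2.1 b.2.2.2.2.1 + P' b.2.1 a.2.2.2.2.1
      + a.1 * b.2.2.2.2.2.1 + b.1 * a.2.2.2.2.2.1) : (EE X X' Y Y'))
  have hcomm : ∀ a b, m0 a b = m0 b a := by
    intro a b
    simp only [m0]
    congr 1
    simp only [Prod.mk.injEq, true_and]
    refine ⟨by abel, by abel, by abel, by abel⟩
  let m : (EE X X' Y Y') →ₗ[ℂ] (EE X X' Y Y') →ₗ[ℂ] (EE X X' Y Y') := LinearMap.mk₂ ℂ m0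
    (by
      intro a a' b
      simp only [m0, ← smul_add, Prod.fst_add, Prod.snd_add, map_add, LinearMap.add_apply,
        Prod.mk_add_mk]
      congr 1
      simp only [Prod.mk.injEq, add_zero, true_and, add_smul, smul_add]
      refine ⟨by abel, by abel, by abel, by ring⟩)
    (by
      intro c a b
      rw [← smul_comm]
      simp only [m0]
      congr 1
      simp only [Prod.smul_fst, Prod.smul_snd, map_smul, LinearMap.smul_apply, Prod.smul_mk,
        smul_zero, smul_add, smul_smul, Prod.mk.injEq, true_and, smul_eq_mul, mul_zero]
      refine ⟨?_, ?_, ?_⟩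
      · rw [mul_comm b.1 c]
      · rw [mul_comm b.1 c]
      · constructor <;> ring)
    (by
      intro a b b'
      simp only [m0, ← smul_add, Prod.fst_add, Prod.snd_add, map_add, LinearMap.add_apply,
        Prod.mk_add_mk]
      congr 1
      simp only [Prod.mk.injEq, add_zero, true_and, add_smul, smul_add]
      refine ⟨by abel, by abel, by abel, by ring⟩)
    (by
      intro c a b
      rw [← smul_comm]
      simp only [m0]
      congr 1
      simp only [Prod.smul_fst, Prod.smul_snd, map_smul, LinearMap.smul_apply, Prod.smul_mk,
        smul_zero, smul_add, smul_smul, Prod.mk.injEq, true_and, smul_eq_mul, mul_zero]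
      refine ⟨?_, ?_, ?_⟩
      · rw [mul_comm a.1 c]
      · rw [mul_comm a.1 c]
      · constructor <;> ring)
  have hassoc : ∀ x y z, m (m x y) z = m x (m y z) := by
    intro a b c
    change m0 (m0 a b) c = m0 a (m0 b c)
    simp only [m0]
    congr 1
    simp only [Prod.smul_fst, Prod.smul_snd, map_smul, LinearMap.smul_apply, smul_zero, map_zero,
      zero_smul, LinearMap.zero_apply, add_zero, zero_add, map_add, LinearMap.add_apply, hc,
      smul_eq_mul, mul_zero, zero_mul, Prod.mk.injEq, true_and]
    ring
  have hn : ∀ a b, ‖m a b‖ ≤ ‖a‖ * ‖b‖ := by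
    intro a b
    change ‖m0 a b‖ ≤ _
    have key : ∀ a : (EE X X' Y Y'), ‖a.1‖ ≤ ‖a‖ ∧ ‖a.2.1‖ ≤ ‖a‖ ∧ ‖a.2.2.1‖ ≤ ‖a‖ ∧ ‖a.2.2.2.1‖ ≤ ‖a‖ ∧
        ‖a.2.2.2.2.1‖ ≤ ‖a‖ ∧ ‖a.2.2.2.2.2.1‖ ≤ ‖a‖ := by
      intro a
      simp [Prod.norm_def]
    obtain ⟨a1, a2, a3, a4, a5, a6⟩ := key a
    obtain ⟨b1, b2, b3, b4, b5, b6⟩ := key b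
    have ha := norm_nonneg a
    have hb := norm_nonneg b
    have mm : ∀ {s t u v : ℝ}, 0 ≤ s → 0 ≤ t → s ≤ u → t ≤ v → s * t ≤ u * v :=
      fun hs ht h1 h2 => mul_le_mul h1 h2 ht (hs.trans h1)
    have e1 : ∀ (c : ℂ) (x : X'), ‖c • i x‖ ≤ ‖c‖ * ‖x‖ := fun c x => by
      rw [norm_smul]; gcongr; exact hi x
    have e2 : ∀ (c : ℂ) (x : Y), ‖c • k x‖ ≤ ‖c‖ * ‖x‖ := fun c x => by
      rw [norm_smul]; gcongr; exact hk x
    have e3 : ∀ (x : X') (y : Y), ‖P (i x) y‖ ≤ ‖x‖ * ‖y‖ := fun x y =>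
      (hP _ _).trans (by gcongr; exact hi x)
    set R := ‖a‖ * ‖b‖ with hR
    have hR0 : 0 ≤ R := by positivity
    have f : ∀ {s t : ℝ}, 0 ≤ s → 0 ≤ t → s ≤ ‖a‖ → t ≤ ‖b‖ → s * t ≤ R := 
      fun hs ht h1 h2 => mm hs ht h1 h2
    have f' : ∀ {s t : ℝ}, 0 ≤ s → 0 ≤ t → s ≤ ‖b‖ → t ≤ ‖a‖ → s * t ≤ R := 
      fun hs ht h1 h2 => (mm hs ht h1 h2).trans (by rw [hR, mul_comm])
    simp only [m0, norm_smul]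
    have h6 : ‖(6⁻¹ : ℂ)‖ = 6⁻¹ := by simp
    rw [h6]
    rw [inv_mul_le_iff₀ (by norm_num)]
    simp only [Prod.norm_def, norm_zero]
    have t2 : ∀ {V : Type} [NormedAddCommGroup V] (x y : V), ‖x‖ ≤ R → ‖y‖ ≤ R →
        ‖x + y‖ ≤ 6 * R := fun x y h1 h2 => by
      have := norm_add_le x y
      linarith
    refine max_le (by positivity) (max_le (by positivity) (max_le (by positivity)
      (max_le ?_ (max_le ?_ (max_le ?_ ?_)))))
    · refine t2 _ _ ((e1 _ _).trans (f ?_ ?_ a1 b2)) ((e1 _ _).trans (f' ?_ ?_ b1 a2)) <;>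
      exact norm_nonneg _
    · refine t2 _ _ ((e2 _ _).trans (f ?_ ?_ a1 b3)) ((e2 _ _).trans (f' ?_ ?_ b1 a3)) <;>
      exact norm_nonneg _
    · refine t2 _ _ ((e3 _ _).trans (f ?_ ?_ a2 b3)) ((e3 _ _).trans (f' ?_ ?_ b2 a3)) <;>
      exact norm_nonneg _
    · have n1 := (hP a.2.2.2.1 b.2.2.1).trans (f (norm_nonneg _) (norm_nonneg _) a4 b3)
      have n2 := (hP b.2.2.2.1 a.2.2.1).trans (f' (norm_nonneg _) (norm_nonneg _) b4 a3)
      have n3 := (hP' a.2.1 b.2.2.2.2.1).trans (f (norm_nonneg _) (norm_nonneg _) a2 b5)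
      have n4 := (hP' b.2.1 a.2.2.2.2.1).trans (f' (norm_nonneg _) (norm_nonneg _) b2 a5)
      have n5 := (norm_mul_le a.1 b.2.2.2.2.2.1).trans (f (norm_nonneg _) (norm_nonneg _) a1 b6)
      have n6 := (norm_mul_le b.1 a.2.2.2.2.2.1).trans (f' (norm_nonneg _) (norm_nonneg _) b1 a6)
      refine (norm_add_le _ _).trans ?_
      have g1 := norm_add_le (P a.2.2.2.1 b.2.2.1) (P b.2.2.2.1 a.2.2.1)
      have g2 := norm_add_le (P a.2.2.2.1 b.2.2.1 + P b.2.2.2.1 a.2.2.1) (P' a.2.1 b.2.2.2.2.1)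
      have g3 := norm_add_le (P a.2.2.2.1 b.2.2.1 + P b.2.2.2.1 a.2.2.1 + P' a.2.1 b.2.2.2.2.1)
        (P' b.2.1 a.2.2.2.2.1)
      have g4 := norm_add_le (P a.2.2.2.1 b.2.2.1 + P b.2.2.2.1 a.2.2.1 + P' a.2.1 b.2.2.2.2.1 +
        P' b.2.1 a.2.2.2.2.1) (a.1 * b.2.2.2.2.2.1)
      linarith
  obtain ⟨A, e, he, hm⟩ := mkAlg_exists (EE X X' Y Y') m hassoc hn
  have hm' : ∀ x y, e x * e y = e (m0 x y) := hm
  refine ⟨A, ?_, e ((6, 0, 0, 0, 0, 0, 0) : (EE X X' Y Y')), e ((0, 0, 0, 0, 0, 0, 6⁻¹) : (EE X X' Y Y')),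
    e.toLinearMap ∘ₗ
      { toFun := fun x => ((0, 0, 0, x, 0, 0, 0) : (EE X X' Y Y')), map_add' := ?_, map_smul' := ?_ },
    e.toLinearMap ∘ₗ
      { toFun := fun x => ((0, x, 0, 0, 0, 0, 0) : (EE X X' Y Y')), map_add' := ?_, map_smul' := ?_ },
    e.toLinearMap ∘ₗ
      { toFun := fun x => ((0, 0, x, 0, 0, 0, 0) : (EE X X' Y Y')), map_add' := ?_, map_smul' := ?_ },
    ?_, ?_, ?_, ?_, ?_, ?_, ?_⟩
  · intro a b
    obtain ⟨a, rfl⟩ := e.surjective a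
    obtain ⟨b, rfl⟩ := e.surjective b
    rw [hm', hm', hcomm]
  · intros; simp
  · intros; simp
  · intros; simp
  · intros; simp
  · intros; simp
  · intros; simp
  · rw [Ne, LinearEquiv.map_eq_zero_iff]
    simp
  · intro x
    simp [he, Prod.norm_def]
  · intro x
    simp [he, Prod.norm_def]
  · intro x
    simp [he, Prod.norm_def]
  · intro x
    simp [hm', m0]
  · intro x y
    simp only [LinearMap.comp_apply, LinearMap.coe_mk, AddHom.coe_mk, LinearEquiv.coe_coe, hm',
      ← map_smul]
    simp [m0, mul_comm]
  · intro y hy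
    simp [hm', m0, hy]

end partA
section partA2

lemma isSeparable_closure_sub {V : Type} [NormedAddCommGroup V] [NormedSpace ℂ V]
    (S : Set V) (hS : S.Countable) :
    TopologicalSpace.SeparableSpace (Submodule.span ℂ S).topologicalClosure := by
  have h : TopologicalSpace.IsSeparable ((Submodule.span ℂ S).topologicalClosure : Set V) := by
    rw [Submodule.topologicalClosure_coe]
    exact (hS.isSeparable.span).closure
  exact h.separableSpace

lemma algA_mid0 {X X' Y V : Type}
    [NormedAddCommGroup X] [NormedSpace ℂ X] [CompleteSpace X] [TopologicalSpace.SeparableSpace X]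
    [NormedAddCommGroup X'] [NormedSpace ℂ X'] [CompleteSpace X']
    [TopologicalSpace.SeparableSpace X']
    [NormedAddCommGroup Y] [NormedSpace ℂ Y] [CompleteSpace Y] [TopologicalSpace.SeparableSpace Y]
    [NormedAddCommGroup V] [NormedSpace ℂ V] [CompleteSpace V]
    (ι : X' →ₗ[ℂ] X) (hι : ∀ x, ‖ι x‖ ≤ ‖x‖)
    (P : X →ₗ[ℂ] Y →ₗ[ℂ] ℂ) (hP : ∀ x y, ‖P x y‖ ≤ ‖x‖ * ‖y‖)
    (k0 : Y →ₗ[ℂ] V) (hk0 : ∀ y, ‖k0 y‖ ≤ ‖y‖)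
    (Q : X' →ₗ[ℂ] V →ₗ[ℂ] ℂ) (hQ : ∀ x y, ‖Q x y‖ ≤ ‖x‖ * ‖y‖)
    (hc : ∀ x y, P (ι x) y = Q x (k0 y)) :
    ∃ A : SepBanachAlgebra, (∀ a b : A.carrier, a * b = b * a) ∧
      ∃ (p w : A.carrier) (jX : X →ₗ[ℂ] A.carrier) (q : X' →ₗ[ℂ] A.carrier)
        (jY : Y →ₗ[ℂ] A.carrier), w ≠ 0 ∧ (∀ x, ‖jX x‖ ≤ ‖x‖) ∧ (∀ x, ‖q x‖ ≤ ‖x‖) ∧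
        (∀ x, ‖jY x‖ ≤ ‖x‖) ∧ (∀ x, p * q x = jX (ι x)) ∧ (∀ x y, jX x * jY y = P x y • w) ∧
        (∀ y, k0 y = 0 → p * jY y = 0) := by
  have hk1 : ∀ y, ‖k0 y‖ ≤ 1 * ‖y‖ := fun y => by
    rw [one_mul]
    exact hk0 y
  have kc : Continuous k0 := AddMonoidHomClass.continuous_of_bound k0 1 hk1
  obtain ⟨Y', hY'⟩ : ∃ Y' : Submodule ℂ V, Y' = (LinearMap.range k0).topologicalClosure :=
    ⟨_, rfl⟩
  have i1 : CompleteSpace Y' := by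
    rw [hY']
    exact (Submodule.isClosed_topologicalClosure _).completeSpace_coe
  have i2 : TopologicalSpace.SeparableSpace Y' := by
    have h : TopologicalSpace.IsSeparable (Y' : Set V) := by
      rw [hY', Submodule.topologicalClosure_coe]
      apply TopologicalSpace.IsSeparable.closure
      rw [LinearMap.coe_range]
      exact TopologicalSpace.isSeparable_range kc
    exact h.separableSpace
  have hm : ∀ y, k0 y ∈ Y' := fun y => by
    rw [hY']
    exact Submodule.le_topologicalClosure _ ⟨y, rfl⟩
  obtain ⟨A, hcomm, p, w, jX, jX', jY, hw, h1, h2, h3, h4, h5, h6⟩ :=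
    algA_aux ι (k0.codRestrict Y' hm) P (Q.compl₂ Y'.subtype) hι (fun y => hk0 y) hP
      (fun x y => hQ x y) (fun x y => hc x y)
  refine ⟨A, hcomm, p, w, jX, jX', jY, hw, h1, h2, h3, h4, h5, ?_⟩
  intro y hy
  exact h6 y (Subtype.ext hy)

lemma algA_mid {X X' Y : Type}
    [NormedAddCommGroup X] [NormedSpace ℂ X] [CompleteSpace X] [TopologicalSpace.SeparableSpace X]
    [NormedAddCommGroup X'] [NormedSpace ℂ X'] [CompleteSpace X']
    [TopologicalSpace.SeparableSpace X']
    [NormedAddCommGroup Y] [NormedSpace ℂ Y] [CompleteSpace Y] [TopologicalSpace.SeparableSpace Y]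
    (ι : X' →ₗ[ℂ] X) (hι : ∀ x, ‖ι x‖ ≤ ‖x‖)
    (P : X →ₗ[ℂ] Y →ₗ[ℂ] ℂ) (hP : ∀ x y, ‖P x y‖ ≤ ‖x‖ * ‖y‖) :
    ∃ A : SepBanachAlgebra, (∀ a b : A.carrier, a * b = b * a) ∧
      ∃ (p w : A.carrier) (jX : X →ₗ[ℂ] A.carrier) (q : X' →ₗ[ℂ] A.carrier)
        (jY : Y →ₗ[ℂ] A.carrier), w ≠ 0 ∧ (∀ x, ‖jX x‖ ≤ ‖x‖) ∧ (∀ x, ‖q x‖ ≤ ‖x‖) ∧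
        (∀ x, ‖jY x‖ ≤ ‖x‖) ∧ (∀ x, p * q x = jX (ι x)) ∧ (∀ x y, jX x * jY y = P x y • w) ∧
        (∀ y, (∀ x, P (ι x) y = 0) → p * jY y = 0) := by
  have hb : ∀ (y : Y) (x : X'), ‖((P.flip y) ∘ₗ ι) x‖ ≤ ‖y‖ * ‖x‖ := fun y x => by
    have := hP (ι x) y
    rw [mul_comm] at this
    exact this.trans (mul_le_mul_of_nonneg_left (hι x) (norm_nonneg _))
  let k0 : Y →ₗ[ℂ] (X' →L[ℂ] ℂ) :=
    { toFun := fun y => LinearMap.mkContinuous ((P.flip y) ∘ₗ ι) ‖y‖ (hb y)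
      map_add' := fun y z => by ext x; simp
      map_smul' := fun c z => by ext x; simp }
  have hk0 : ∀ y, ‖k0 y‖ ≤ ‖y‖ := fun y => LinearMap.mkContinuous_norm_le _ (norm_nonneg _) (hb y)
  let Q : X' →ₗ[ℂ] (X' →L[ℂ] ℂ) →ₗ[ℂ] ℂ := LinearMap.mk₂ ℂ (fun x y => y x)
    (by intros; simp) (by intros; simp) (by intros; simp) (by intros; simp)
  have hQ : ∀ x y, ‖Q x y‖ ≤ ‖x‖ * ‖y‖ := fun x y => by
    have := y.le_opNorm x
    rw [mul_comm] at this
    exact this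
  obtain ⟨A, hcomm, p, w, jX, jX', jY, hw, h1, h2, h3, h4, h5, h6⟩ :=
    algA_mid0 ι hι P hP k0 hk0 Q hQ (fun x y => rfl)
  refine ⟨A, hcomm, p, w, jX, jX', jY, hw, h1, h2, h3, h4, h5, ?_⟩
  intro y hy
  apply h6
  ext x
  exact hy x

lemma algA {X Y : Type}
    [NormedAddCommGroup X] [NormedSpace ℂ X] [CompleteSpace X] [TopologicalSpace.SeparableSpace X]
    [NormedAddCommGroup Y] [NormedSpace ℂ Y] [CompleteSpace Y] [TopologicalSpace.SeparableSpace Y]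
    (P : X →ₗ[ℂ] Y →ₗ[ℂ] ℂ) (hP : ∀ x y, ‖P x y‖ ≤ ‖x‖ * ‖y‖) (S : Set X) :
    ∃ A : SepBanachAlgebra, (∀ a b : A.carrier, a * b = b * a) ∧
      ∃ (p w : A.carrier) (jX : X →ₗ[ℂ] A.carrier) (q : S → A.carrier)
        (jY : Y →ₗ[ℂ] A.carrier), w ≠ 0 ∧ (∀ x, ‖jX x‖ ≤ ‖x‖) ∧ (∀ x, ‖q x‖ ≤ ‖(x : X)‖) ∧
        (∀ x, ‖jY x‖ ≤ ‖x‖) ∧ (∀ x, p * q x = jX x) ∧ (∀ x y, jX x * jY y = P x y • w) ∧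
        (∀ y, (∀ x ∈ S, P x y = 0) → p * jY y = 0) := by
  let X' : Submodule ℂ X := (Submodule.span ℂ S).topologicalClosure
  have : CompleteSpace X' := (Submodule.isClosed_topologicalClosure _).completeSpace_coe
  have hX's : TopologicalSpace.SeparableSpace X' := inferInstance
  obtain ⟨A, hcomm, p, w, jX, jX', jY, hw, h1, h2, h3, h4, h5, h6⟩ :=
    algA_mid X'.subtype (fun x => le_rfl) P hP
  have hS : ∀ x ∈ S, x ∈ X' := fun x hx =>
    Submodule.le_topologicalClosure _ (Submodule.subset_span hx)
  refine ⟨A, hcomm, p, w, jX, fun x => jX' ⟨x, hS x x.2⟩, jY, hw, h1, fun x => h2 _, h3,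
    fun x => h4 _, h5, ?_⟩
  intro y hy
  apply h6
  have hle : X' ≤ LinearMap.ker (LinearMap.mkContinuous (P.flip y) ‖y‖ (fun x => by
        have := hP x y
        rw [mul_comm] at this
        simpa using this)).toLinearMap := by
    apply Submodule.topologicalClosure_minimal
    · rw [Submodule.span_le]
      intro x hx
      simpa using hy x hx
    · exact ContinuousLinearMap.isClosed_ker _
  intro x
  have := hle x.2
  simpa using this

end partA2
section partB

lemma exists_close {T : Set (ℕ → Bool)} (hT : ¬ T.Countable) {V : Type} [PseudoMetricSpace V]
    [TopologicalSpace.SeparableSpace V] (F : (ℕ → Bool) → V) (k0 : ℕ) {ε : ℝ} (hε : 0 < ε) :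
    ∃ s ∈ T, ∃ t ∈ T, ∃ k, k0 ≤ k ∧ s k = true ∧ t k = false ∧ dist (F s) (F t) < ε := by
  obtain ⟨D, hDc, hD⟩ := TopologicalSpace.exists_countable_dense V
  have hc : ∀ v : V, ∃ d : D, dist v d < ε / 2 := by
    intro v
    obtain ⟨d, hd, h⟩ := hD.exists_dist_lt v (half_pos hε)
    exact ⟨⟨d, hd⟩, h⟩
  choose d hd using hc
  have : Countable D := hDc.to_subtype
  let Φ : (ℕ → Bool) → D × (Fin k0 → Bool) := fun t => (d (F t), fun i => t i)
  have hni : ¬ Set.InjOn Φ T := fun h =>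
    hT ((Set.mapsTo_univ Φ T).countable_of_injOn h (Set.countable_univ))
  simp only [Set.InjOn, not_forall] at hni
  obtain ⟨s, hs, t, ht, hst, hne⟩ := hni
  have h1 : d (F s) = d (F t) := congrArg Prod.fst hst
  have h2 : ∀ i < k0, s i = t i := fun i hi => congrFun (congrArg Prod.snd hst) ⟨i, hi⟩
  have hdist : dist (F s) (F t) < ε := by
    have a := hd (F s)
    have b := hd (F t)
    rw [← h1] at b
    calc dist (F s) (F t) ≤ dist (F s) (d (F s)) + dist (F t) (d (F s)) := dist_triangle_right _ _ _
      _ < ε := by linarith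
  obtain ⟨k, hk⟩ := Function.ne_iff.mp hne
  have hkk : k0 ≤ k := by
    by_contra h
    exact hk (h2 k (not_le.mp h))
  cases hsk : s k
  · cases htk : t k
    · exact absurd (hsk.trans htk.symm) hk
    · exact ⟨t, ht, s, hs, k, hkk, htk, hsk, by rwa [dist_comm]⟩
  · cases htk : t k
    · exact ⟨s, hs, t, ht, k, hkk, hsk, htk, hdist⟩
    · exact absurd (hsk.trans htk.symm) hk

lemma soft (B : SepBanachAlgebra) {X Y : Type}
    [NormedAddCommGroup X] [NormedSpace ℂ X] [CompleteSpace X] [TopologicalSpace.SeparableSpace X]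
    [NormedAddCommGroup Y] [NormedSpace ℂ Y] [CompleteSpace Y] [TopologicalSpace.SeparableSpace Y]
    (P : X →ₗ[ℂ] Y →ₗ[ℂ] ℂ) (hP : ∀ x y, ‖P x y‖ ≤ ‖x‖ * ‖y‖)
    (I : ℕ → Type) [∀ k, Fintype (I k)] [∀ k, Nonempty (I k)]
    (x : ∀ k, I k → X) (y : ∀ k, I k → Y) (hx : ∀ k j, ‖x k j‖ ≤ 1) (hy : ∀ k j, ‖y k j‖ ≤ 1)
    (hxy : ∀ k j, P (x k j) (y k j) = 1) (hxy0 : ∀ k j l i, k ≠ l → P (x k j) (y l i) = 0)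
    (δ : ℕ → ℝ) (hδ : Summable δ) (hδ0 : ∀ k, 0 ≤ δ k)
    (hD : ∀ (f : X →ₗ[ℂ] B.carrier) (g : Y →ₗ[ℂ] B.carrier) (N : ℝ), 0 ≤ N →
      (∀ u, ‖f u‖ ≤ N * ‖u‖) → (∀ u, ‖g u‖ ≤ N * ‖u‖) → ∀ k,
      ‖((Fintype.card (I (k + 1)) : ℂ)⁻¹ • ∑ j, f (x (k + 1) j) * g (y (k + 1) j)) -
        ((Fintype.card (I k) : ℂ)⁻¹ • ∑ j, f (x k j) * g (y k j))‖ ≤ N * N * δ k) :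
    ∃ A : SepBanachAlgebra,
      (∀ x y : A.carrier, x * y = y * x) ∧
      ¬ ∃ φ : A.carrier →ₙₐ[ℂ] B.carrier,
        Function.Injective φ ∧
        (∃ C : ℝ, ∀ a : A.carrier, ‖φ a‖ ≤ C * ‖a‖) ∧
        (∃ c : ℝ, 0 < c ∧ ∀ a : A.carrier, c * ‖a‖ ≤ ‖φ a‖) := by
  by_contra hcon
  have hcon' : ∀ A : SepBanachAlgebra, (∀ x y : A.carrier, x * y = y * x) →
      ∃ φ : A.carrier →ₙₐ[ℂ] B.carrier, Function.Injective φ ∧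
        (∃ C : ℝ, ∀ a : A.carrier, ‖φ a‖ ≤ C * ‖a‖) := by
    intro A hA
    by_contra h
    exact hcon ⟨A, hA, fun ⟨φ, h1, h2, _⟩ => h ⟨φ, h1, h2⟩⟩
  have main : ∀ t : ℕ → Bool, ∃ (p w : B.carrier) (f : X →ₗ[ℂ] B.carrier)
      (q : ∀ k, I k → B.carrier) (g : Y →ₗ[ℂ] B.carrier) (N : ℕ),
      (1 : ℝ) ≤ N ∧ (1 : ℝ) ≤ N * ‖w‖ ∧ (∀ u, ‖f u‖ ≤ N * ‖u‖) ∧ (∀ u, ‖g u‖ ≤ N * ‖u‖) ∧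
      (∀ k j, t k = true → ‖q k j‖ ≤ N ∧ f (x k j) = q k j * p) ∧
      (∀ u v, f u * g v = P u v • w) ∧ (∀ k j, t k = false → p * g (y k j) = 0) := by
    intro t
    let S : Set X := {u | ∃ k j, t k = true ∧ u = x k j}
    obtain ⟨A, hcomm, p, w, jX, q, jY, hw, h1, h2, h3, h4, h5, h6⟩ := algA P hP S
    obtain ⟨φ, hinj, C, hC⟩ := hcon' A hcomm
    have hφw : φ w ≠ 0 := fun h => hw (hinj (h.trans (map_zero φ).symm))
    have hφw' : 0 < ‖φ w‖ := norm_pos_iff.mpr hφw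
    obtain ⟨N, hN⟩ := exists_nat_ge (max 1 (max C (1 / ‖φ w‖)))
    have hN1 : (1 : ℝ) ≤ N := (le_max_left _ _).trans hN
    have hNC : C ≤ N := (le_max_left _ _).trans ((le_max_right _ _).trans hN)
    have hNw : 1 / ‖φ w‖ ≤ N := (le_max_right _ _).trans ((le_max_right _ _).trans hN)
    have hφ : ∀ a r, ‖a‖ ≤ r → ‖φ a‖ ≤ N * r := fun a r h =>
      (hC a).trans (mul_le_mul hNC h (norm_nonneg _) (by linarith))
    classical
    refine ⟨φ p, φ w, (φ : A.carrier →ₗ[ℂ] B.carrier) ∘ₗ jX,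
      fun k j => if h : t k = true then φ (q ⟨x k j, k, j, h, rfl⟩) else 0,
      (φ : A.carrier →ₗ[ℂ] B.carrier) ∘ₗ jY, N, hN1, ?_, ?_, ?_, ?_, ?_, ?_⟩
    · rwa [div_le_iff₀ hφw'] at hNw
    · intro u
      exact hφ _ _ (h1 u)
    · intro u
      exact hφ _ _ (h3 u)
    · intro k j h
      simp only [h, dite_true]
      constructor
      · have := hφ _ _ ((h2 ⟨x k j, k, j, h, rfl⟩).trans (hx k j))
        simpa using this
      · have := h4 ⟨x k j, k, j, h, rfl⟩
        rw [← map_mul, hcomm, this]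
        rfl
    · intro u v
      change φ (jX u) * φ (jY v) = _
      rw [← map_mul, h5, map_smul]
    · intro k j h
      change φ p * φ (jY _) = _
      rw [← map_mul, h6, map_zero]
      rintro _ ⟨l, i, hl, rfl⟩
      apply hxy0
      rintro rfl
      rw [h] at hl
      exact Bool.noConfusion hl
  choose p w f q g N hN1 hNw hf hg hq hfg hpg using main
  obtain ⟨n, hn⟩ : ∃ n : ℕ, ¬ ({t | N t = n} : Set (ℕ → Bool)).Countable := by
    by_contra h
    push Not at h
    have hu : (⋃ n : ℕ, {t | N t = n} : Set (ℕ → Bool)).Countable := Set.countable_iUnion h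
    have : (⋃ n : ℕ, {t | N t = n} : Set (ℕ → Bool)) = Set.univ := by
      ext t; simp
    rw [this, Set.countable_univ_iff] at hu
    obtain ⟨F, hF⟩ := exists_surjective_nat (ℕ → Bool)
    obtain ⟨m, hm⟩ := hF (fun i => !(F i i))
    have := congrFun hm m
    revert this
    cases F m m <;> simp
  have hn1 : (1 : ℝ) ≤ n := by
    obtain ⟨t, ht⟩ : ({t | N t = n} : Set (ℕ → Bool)).Nonempty := by
      rw [Set.nonempty_iff_ne_empty]
      rintro h
      exact hn (h ▸ Set.countable_empty)
    have := hN1 t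
    rwa [ht] at this
  have hn0 : (0 : ℝ) < n := by linarith
  set η : ℝ := 1 / (4 * n * n * n) with hη
  have hη0 : 0 < η := by positivity
  obtain ⟨k0, hk0⟩ : ∃ k0, ∀ k, k0 ≤ k → ∑ i ∈ Finset.Ico k0 k, δ i < η := by
    have hcs := hδ.hasSum.tendsto_sum_nat.cauchySeq
    rw [Metric.cauchySeq_iff'] at hcs
    obtain ⟨k0, h⟩ := hcs η hη0
    refine ⟨k0, fun k hk => ?_⟩
    have := h k hk
    rw [Real.dist_eq] at this
    rw [Finset.sum_Ico_eq_sub _ hk]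
    exact (le_abs_self _).trans_lt this
  obtain ⟨s, hs, t, ht, k, hk, hsk, htk, hdist⟩ := exists_close hn
    (fun t => (p t, fun j : I k0 => f t (x k0 j))) k0 hη0
  have hs' : N s = n := hs
  have ht' : N t = n := ht
  have hp : ‖p s - p t‖ ≤ η := by
    rw [← dist_eq_norm]
    exact (le_max_left _ _).trans hdist.le
  have hff : ∀ j, ‖f s (x k0 j) - f t (x k0 j)‖ ≤ η := by
    intro j
    rw [← dist_eq_norm]
    have h2 : dist (fun j : I k0 => f s (x k0 j)) (fun j : I k0 => f t (x k0 j)) ≤ η :=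
      (le_max_right _ _).trans hdist.le
    exact (dist_le_pi_dist (fun j : I k0 => f s (x k0 j)) (fun j : I k0 => f t (x k0 j)) j).trans h2
  let z : ℕ → B.carrier := fun k => (Fintype.card (I k) : ℂ)⁻¹ • ∑ j, f s (x k j) * g t (y k j)
  have avg : ∀ (k : ℕ) (F : I k → B.carrier) (r : ℝ), (∀ j, ‖F j‖ ≤ r) →
      ‖(Fintype.card (I k) : ℂ)⁻¹ • ∑ j, F j‖ ≤ r := by
    intro k F r h
    have hc : (0 : ℝ) < Fintype.card (I k) := by exact_mod_cast Fintype.card_pos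
    rw [norm_smul, norm_inv, Complex.norm_natCast, inv_mul_le_iff₀ hc]
    calc ‖∑ j, F j‖ ≤ ∑ j : I k, r := norm_sum_le_of_le _ (fun j _ => h j)
      _ = _ := by simp
  have hgy : ∀ k j, ‖g t (y k j)‖ ≤ n := by
    intro k j
    have := hg t (y k j)
    rw [ht'] at this
    nlinarith [hy k j]
  have step : ∀ k, ‖z (k + 1) - z k‖ ≤ n * n * δ k := fun k =>
    hD (f s) (g t) n (by linarith) (fun u => hs' ▸ hf s u) (fun u => ht' ▸ hg t u) k
  have tele : ∀ k, k0 ≤ k → ‖z k - z k0‖ ≤ n * n * ∑ i ∈ Finset.Ico k0 k, δ i := by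
    intro k hk
    induction k, hk using Nat.le_induction with
    | base => simp
    | succ k hk ih =>
      rw [Finset.sum_Ico_succ_top hk, mul_add]
      calc ‖z (k + 1) - z k0‖ = ‖(z k - z k0) + (z (k + 1) - z k)‖ := by congr 1; abel
        _ ≤ _ := (norm_add_le _ _).trans (add_le_add ih (step k))
  have e1 : ‖z k0 - w t‖ ≤ η * n := by
    have : w t = (Fintype.card (I k0) : ℂ)⁻¹ • ∑ j, f t (x k0 j) * g t (y k0 j) := by
      have hc : (Fintype.card (I k0) : ℂ) ≠ 0 := by exact_mod_cast Fintype.card_ne_zero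
      simp only [hfg, hxy, one_smul, Finset.sum_const, Finset.card_univ]
      rw [← Nat.cast_smul_eq_nsmul ℂ, smul_smul, inv_mul_cancel₀ hc, one_smul]
    rw [this]
    simp only [z]
    rw [← smul_sub, ← Finset.sum_sub_distrib]
    apply avg
    intro j
    rw [← sub_mul]
    exact (norm_mul_le _ _).trans (mul_le_mul (hff j) (hgy _ _) (norm_nonneg _) hη0.le)
  have e2 : ‖z k‖ ≤ n * η * n := by
    apply avg
    intro j
    obtain ⟨q1, q2⟩ := hq s k j hsk
    rw [hs'] at q1
    have : f s (x k j) * g t (y k j) = q s k j * (p s - p t) * g t (y k j) := by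
      rw [mul_sub, sub_mul, mul_assoc _ (p t), hpg t k j htk, mul_zero, sub_zero, q2]
    rw [this]
    exact (norm_mul_le _ _).trans (mul_le_mul ((norm_mul_le _ _).trans
      (mul_le_mul q1 hp (norm_nonneg _) hn0.le)) (hgy _ _) (norm_nonneg _) (by positivity))
  have e3 : ‖z k - z k0‖ ≤ n * n * η :=
    (tele k hk).trans (mul_le_mul_of_nonneg_left (hk0 k hk).le (by positivity))
  have e4 : ‖w t‖ ≤ η * n + n * η * n + n * n * η := by
    calc ‖w t‖ = ‖z k - (z k - z k0) - (z k0 - w t)‖ := by congr 1; abel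
      _ ≤ ‖z k‖ + ‖z k - z k0‖ + ‖z k0 - w t‖ :=
        (norm_sub_le _ _).trans (add_le_add_left (norm_sub_le _ _) _)
      _ ≤ _ := by linarith
  have e5 := hNw t
  rw [ht'] at e5
  have e6 : η * (4 * n * n * n) = 1 := by
    rw [hη]; field_simp
  have e7 : (1 : ℝ) ≤ n * (η * n + n * η * n + n * n * η) :=
    e5.trans (mul_le_mul_of_nonneg_left e4 hn0.le)
  have e8 : η * n * n ≤ η * n * n * n := by
    have : 0 ≤ η * n * n := by positivity
    nlinarith
  have e9 : 0 < η * n * n * n := by positivity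
  nlinarith

end partB
section partC1

open ComplexConjugate

lemma swap_alg {X Y R J Γ : Type} [NormedAddCommGroup X] [NormedSpace ℂ X]
    [NormedAddCommGroup Y] [NormedSpace ℂ Y] [NonUnitalNormedRing R] [NormedSpace ℂ R]
    [IsScalarTower ℂ R R] [SMulCommClass ℂ R R] [Fintype J] [Fintype Γ]
    (f : X →ₗ[ℂ] R) (g : Y →ₗ[ℂ] R) (c : J → Γ → ℂ) (x : J → X) (d : Γ → Y) (n m : ℂ) :
    n • ∑ j, f (x j) * g (m • ∑ γ, c j γ • d γ) =
      m • ∑ γ, f (n • ∑ j, c j γ • x j) * g (d γ) := by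
  simp only [map_smul, map_sum, Finset.smul_sum, Finset.mul_sum, Finset.sum_mul, smul_mul_assoc,
    mul_smul_comm]
  rw [Finset.sum_comm]
  refine Finset.sum_congr rfl fun γ _ => Finset.sum_congr rfl fun j _ => ?_
  simp only [smul_smul]
  congr 1
  ring

lemma avg_norm {R Γ : Type} [NormedAddCommGroup R] [NormedSpace ℂ R] [Fintype Γ] [Nonempty Γ]
    (F : Γ → R) (r : ℝ) (h : ∀ j, ‖F j‖ ≤ r) :
    ‖(Fintype.card Γ : ℂ)⁻¹ • ∑ j, F j‖ ≤ r := by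
  have hc : (0 : ℝ) < Fintype.card Γ := by exact_mod_cast Fintype.card_pos
  rw [norm_smul, norm_inv, Complex.norm_natCast, inv_mul_le_iff₀ hc]
  calc ‖∑ j, F j‖ ≤ ∑ j : Γ, r := norm_sum_le_of_le _ (fun j _ => h j)
    _ = _ := by simp

lemma enfloXY (B : SepBanachAlgebra) {X Y : Type}
    [NormedAddCommGroup X] [NormedSpace ℂ X] [CompleteSpace X] [TopologicalSpace.SeparableSpace X]
    [NormedAddCommGroup Y] [NormedSpace ℂ Y] [CompleteSpace Y] [TopologicalSpace.SeparableSpace Y]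
    (P : X →ₗ[ℂ] Y →ₗ[ℂ] ℂ) (hP : ∀ x y, ‖P x y‖ ≤ ‖x‖ * ‖y‖)
    (I G : ℕ → Type) [∀ k, Fintype (I k)] [∀ k, Nonempty (I k)] [∀ k, DecidableEq (I k)]
    [∀ k, Fintype (G k)] [∀ k, Nonempty (G k)]
    (sig : ∀ k, I k → G k → ℂ) (tau : ∀ k, I (k + 1) → G k → ℂ)
    (hs1 : ∀ k j g, ‖sig k j g‖ = 1) (ht1 : ∀ k j g, ‖tau k j g‖ = 1)
    (hss : ∀ k i j, ∑ g, conj (sig k i g) * sig k j g = if i = j then (Fintype.card (G k) : ℂ) else 0)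
    (htt : ∀ k i j, ∑ g, conj (tau k i g) * tau k j g = if i = j then (Fintype.card (G k) : ℂ) else 0)
    (hst : ∀ k i j, ∑ g, conj (sig k i g) * tau k j g = 0)
    (δ : ℕ → ℝ) (hδ : Summable δ) (hδ0 : ∀ k, 0 ≤ δ k) (hanti : Antitone δ)
    (h3 : ∀ k g h, ‖(Fintype.card (I (k + 1)) : ℂ)⁻¹ * ∑ j, conj (tau k j g) * tau k j h -
      (Fintype.card (I k) : ℂ)⁻¹ * ∑ j, conj (sig k j g) * sig k j h‖ ≤ δ k)
    (h4 : ∀ k g h, ‖(Fintype.card (I (k + 1)) : ℂ)⁻¹ * ∑ j, conj (tau k j g) * sig (k + 1) j h‖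
      ≤ δ (k + 1))
    (x : ∀ k, I k → X) (d : ∀ k, G k → Y) (hd : ∀ k g, ‖d k g‖ ≤ 1)
    (hxs : ∀ k j g, P (x k j) (d k g) = sig k j g)
    (hxt : ∀ k j g, P (x (k + 1) j) (d k g) = tau k j g)
    (hx0 : ∀ k l j g, k ≠ l → k ≠ l + 1 → P (x k j) (d l g) = 0)
    (hX : ∀ (u : X) (r : ℝ), 0 ≤ r → (∀ k g, ‖P u (d k g)‖ ≤ r) → ‖u‖ ≤ r)
    (hY : ∀ y, (∀ k j, P (x k j) y = 0) → y = 0) :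
    ∃ A : SepBanachAlgebra,
      (∀ x y : A.carrier, x * y = y * x) ∧
      ¬ ∃ φ : A.carrier →ₙₐ[ℂ] B.carrier,
        Function.Injective φ ∧
        (∃ C : ℝ, ∀ a : A.carrier, ‖φ a‖ ≤ C * ‖a‖) ∧
        (∃ c : ℝ, 0 < c ∧ ∀ a : A.carrier, c * ‖a‖ ≤ ‖φ a‖) := by
  have hcG : ∀ k, (Fintype.card (G k) : ℂ) ≠ 0 := fun k => by exact_mod_cast Fintype.card_ne_zero
  have hts : ∀ k i j, ∑ g, conj (tau k i g) * sig k j g = 0 := fun k i j => by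
    have := congrArg conj (hst k j i)
    simpa [map_sum, mul_comm] using this
  let y : ∀ k, I k → Y := fun k j => (Fintype.card (G k) : ℂ)⁻¹ • ∑ g, conj (sig k j g) • d k g
  let y2 : ∀ k, I (k + 1) → Y := fun k j =>
    (Fintype.card (G k) : ℂ)⁻¹ • ∑ g, conj (tau k j g) • d k g
  have Py : ∀ k j u, P u (y k j) =
      (Fintype.card (G k) : ℂ)⁻¹ * ∑ g, conj (sig k j g) * P u (d k g) := by
    intro k j u
    simp only [y, map_smul, map_sum, smul_eq_mul]
  have Py2 : ∀ k j u, P u (y2 k j) =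
      (Fintype.card (G k) : ℂ)⁻¹ * ∑ g, conj (tau k j g) * P u (d k g) := by
    intro k j u
    simp only [y2, map_smul, map_sum, smul_eq_mul]
  have a1 : ∀ k i j, P (x k i) (y k j) = if j = i then 1 else 0 := by
    intro k i j
    rw [Py]
    simp only [hxs, hss]
    split_ifs
    · exact inv_mul_cancel₀ (hcG k)
    · exact mul_zero _
  have a2 : ∀ k l i j, k ≠ l → P (x k i) (y l j) = 0 := by
    intro k l i j hkl
    rw [Py]
    by_cases h : k = l + 1
    · subst h
      simp only [hxt, hst, mul_zero]
    · simp only [hx0 k l i _ hkl h, mul_zero, Finset.sum_const_zero]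
  have b1 : ∀ k i j, P (x (k + 1) i) (y2 k j) = if j = i then 1 else 0 := by
    intro k i j
    rw [Py2]
    simp only [hxt, htt]
    split_ifs
    · exact inv_mul_cancel₀ (hcG k)
    · exact mul_zero _
  have b2 : ∀ k l i j, k ≠ l + 1 → P (x k i) (y2 l j) = 0 := by
    intro k l i j hkl
    rw [Py2]
    by_cases h : k = l
    · subst h
      simp only [hxs, hts, mul_zero]
    · simp only [hx0 k l i _ h hkl, mul_zero, Finset.sum_const_zero]
  have hyy : ∀ k j, y (k + 1) j = y2 k j := by
    intro k j
    rw [← sub_eq_zero]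
    apply hY
    intro l i
    rw [map_sub]
    by_cases h : l = k + 1
    · subst h
      rw [a1, b1, sub_self]
    · rw [a2 _ _ _ _ h, b2 _ _ _ _ h, sub_self]
  refine soft B P hP I x y ?_ ?_ (fun k j => by rw [a1, if_pos rfl]) (fun k j l i h => a2 k l j i h)
    δ hδ hδ0 ?_
  · intro k j
    apply hX _ _ zero_le_one
    intro l g
    by_cases h : k = l
    · subst h
      rw [hxs, hs1]
    · by_cases h' : k = l + 1
      · subst h'
        rw [hxt, ht1]
      · rw [hx0 _ _ _ _ h h', norm_zero]
        exact zero_le_one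
  · intro k j
    apply avg_norm
    intro g
    rw [norm_smul, RCLike.norm_conj, hs1, one_mul]
    exact hd k g
  · intro f g N hN hf hg k
    simp only [hyy]
    simp only [y, y2]
    rw [swap_alg f g (fun j γ => conj (tau k j γ)), swap_alg f g (fun j γ => conj (sig k j γ)),
      ← smul_sub, ← Finset.sum_sub_distrib]
    apply avg_norm
    intro γ
    rw [← sub_mul, ← map_sub]
    have key : ‖(Fintype.card (I (k + 1)) : ℂ)⁻¹ • ∑ j, conj (tau k j γ) • x (k + 1) j -
        (Fintype.card (I k) : ℂ)⁻¹ • ∑ j, conj (sig k j γ) • x k j‖ ≤ δ k := by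
      apply hX _ _ (hδ0 k)
      intro l h
      simp only [map_sub, map_smul, map_sum, LinearMap.sub_apply, LinearMap.smul_apply,
        LinearMap.sum_apply, smul_eq_mul]
      by_cases h1 : l = k
      · subst h1
        simp only [hxs, hxt]
        exact h3 _ _ _
      by_cases h2 : l = k + 1
      · subst h2
        simp only [hxs, hx0 k (k + 1) _ _ (by omega) (by omega), mul_zero, Finset.sum_const_zero,
          sub_zero]
        exact (h4 _ _ _).trans (hanti (Nat.le_succ k))
      by_cases h3 : k = l + 1
      · subst h3
        simp only [hxt, hx0 (l + 1 + 1) l _ _ (by omega) (by omega), mul_zero,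
          Finset.sum_const_zero, zero_sub, norm_neg]
        refine le_trans (le_of_eq ?_) (h4 l h γ)
        rw [← RCLike.norm_conj]
        congr 1
        simp [map_sum, mul_comm]
      · simp only [hx0 k l _ _ (by omega) (by omega), hx0 (k + 1) l _ _ (by omega) (by omega),
          mul_zero, Finset.sum_const_zero, sub_zero, norm_zero]
        exact hδ0 k
    have e1 := (hf _).trans (mul_le_mul_of_nonneg_left key hN)
    have e2 : ‖g (d k γ)‖ ≤ N := (hg _).trans (mul_le_of_le_one_right hN (hd k γ))
    calc _ ≤ _ := norm_mul_le _ _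
      _ ≤ (N * δ k) * N := mul_le_mul e1 e2 (norm_nonneg _) (mul_nonneg hN (hδ0 k))
      _ = N * N * δ k := by ring

end partC1
section partC2

open ComplexConjugate

lemma enfloX (B : SepBanachAlgebra) {X V : Type}
    [NormedAddCommGroup X] [NormedSpace ℂ X] [CompleteSpace X] [TopologicalSpace.SeparableSpace X]
    [NormedAddCommGroup V] [NormedSpace ℂ V] [CompleteSpace V]
    (Q : X →ₗ[ℂ] V →ₗ[ℂ] ℂ) (hQ : ∀ x y, ‖Q x y‖ ≤ ‖x‖ * ‖y‖)
    (I G : ℕ → Type) [∀ k, Fintype (I k)] [∀ k, Nonempty (I k)] [∀ k, DecidableEq (I k)]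
    [∀ k, Fintype (G k)] [∀ k, Nonempty (G k)]
    (sig : ∀ k, I k → G k → ℂ) (tau : ∀ k, I (k + 1) → G k → ℂ)
    (hs1 : ∀ k j g, ‖sig k j g‖ = 1) (ht1 : ∀ k j g, ‖tau k j g‖ = 1)
    (hss : ∀ k i j, ∑ g, conj (sig k i g) * sig k j g = if i = j then (Fintype.card (G k) : ℂ) else 0)
    (htt : ∀ k i j, ∑ g, conj (tau k i g) * tau k j g = if i = j then (Fintype.card (G k) : ℂ) else 0)
    (hst : ∀ k i j, ∑ g, conj (sig k i g) * tau k j g = 0)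
    (δ : ℕ → ℝ) (hδ : Summable δ) (hδ0 : ∀ k, 0 ≤ δ k) (hanti : Antitone δ)
    (h3 : ∀ k g h, ‖(Fintype.card (I (k + 1)) : ℂ)⁻¹ * ∑ j, conj (tau k j g) * tau k j h -
      (Fintype.card (I k) : ℂ)⁻¹ * ∑ j, conj (sig k j g) * sig k j h‖ ≤ δ k)
    (h4 : ∀ k g h, ‖(Fintype.card (I (k + 1)) : ℂ)⁻¹ * ∑ j, conj (tau k j g) * sig (k + 1) j h‖
      ≤ δ (k + 1))
    (x : ∀ k, I k → X) (d : ∀ k, G k → V) (hd : ∀ k g, ‖d k g‖ ≤ 1)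
    (hxs : ∀ k j g, Q (x k j) (d k g) = sig k j g)
    (hxt : ∀ k j g, Q (x (k + 1) j) (d k g) = tau k j g)
    (hx0 : ∀ k l j g, k ≠ l → k ≠ l + 1 → Q (x k j) (d l g) = 0)
    (hX : ∀ (u : X) (r : ℝ), 0 ≤ r → (∀ k g, ‖Q u (d k g)‖ ≤ r) → ‖u‖ ≤ r)
    (hY : ∀ y, (∀ k j, Q (x k j) y = 0) → y = 0) :
    ∃ A : SepBanachAlgebra,
      (∀ x y : A.carrier, x * y = y * x) ∧
      ¬ ∃ φ : A.carrier →ₙₐ[ℂ] B.carrier,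
        Function.Injective φ ∧
        (∃ C : ℝ, ∀ a : A.carrier, ‖φ a‖ ≤ C * ‖a‖) ∧
        (∃ c : ℝ, 0 < c ∧ ∀ a : A.carrier, c * ‖a‖ ≤ ‖φ a‖) := by
  let S : Set V := Set.range (fun ω : Σ k, G k => d ω.1 ω.2)
  obtain ⟨Y, hYd⟩ : ∃ Y : Submodule ℂ V, Y = (Submodule.span ℂ S).topologicalClosure :=
    ⟨_, rfl⟩
  have i1 : CompleteSpace Y := by
    rw [hYd]
    exact (Submodule.isClosed_topologicalClosure _).completeSpace_coe
  have i2 : TopologicalSpace.SeparableSpace Y := by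
    rw [hYd]
    exact isSeparable_closure_sub S (Set.countable_range _)
  have hm : ∀ k g, d k g ∈ Y := fun k g => by
    rw [hYd]
    exact Submodule.le_topologicalClosure _ (Submodule.subset_span ⟨⟨k, g⟩, rfl⟩)
  exact enfloXY B (Q.compl₂ Y.subtype) (fun x y => hQ x y) I G sig tau hs1 ht1 hss htt hst δ hδ hδ0
    hanti h3 h4 x (fun k g => ⟨d k g, hm k g⟩) (fun k g => hd k g) hxs hxt hx0 hX
    (fun y hy => Subtype.ext (hY y hy))

lemma enfloX2 (B : SepBanachAlgebra) {X : Type}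
    [NormedAddCommGroup X] [NormedSpace ℂ X] [CompleteSpace X] [TopologicalSpace.SeparableSpace X]
    (I G : ℕ → Type) [∀ k, Fintype (I k)] [∀ k, Nonempty (I k)] [∀ k, DecidableEq (I k)]
    [∀ k, Fintype (G k)] [∀ k, Nonempty (G k)]
    (sig : ∀ k, I k → G k → ℂ) (tau : ∀ k, I (k + 1) → G k → ℂ)
    (hs1 : ∀ k j g, ‖sig k j g‖ = 1) (ht1 : ∀ k j g, ‖tau k j g‖ = 1)
    (hss : ∀ k i j, ∑ g, conj (sig k i g) * sig k j g = if i = j then (Fintype.card (G k) : ℂ) else 0)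
    (htt : ∀ k i j, ∑ g, conj (tau k i g) * tau k j g = if i = j then (Fintype.card (G k) : ℂ) else 0)
    (hst : ∀ k i j, ∑ g, conj (sig k i g) * tau k j g = 0)
    (δ : ℕ → ℝ) (hδ : Summable δ) (hδ0 : ∀ k, 0 ≤ δ k) (hanti : Antitone δ)
    (h3 : ∀ k g h, ‖(Fintype.card (I (k + 1)) : ℂ)⁻¹ * ∑ j, conj (tau k j g) * tau k j h -
      (Fintype.card (I k) : ℂ)⁻¹ * ∑ j, conj (sig k j g) * sig k j h‖ ≤ δ k)
    (h4 : ∀ k g h, ‖(Fintype.card (I (k + 1)) : ℂ)⁻¹ * ∑ j, conj (tau k j g) * sig (k + 1) j h‖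
      ≤ δ (k + 1))
    (x : ∀ k, I k → X) (d : ∀ k, G k → X →ₗ[ℂ] ℂ) (hd : ∀ k g u, ‖d k g u‖ ≤ ‖u‖)
    (hxs : ∀ k j g, d k g (x k j) = sig k j g)
    (hxt : ∀ k j g, d k g (x (k + 1) j) = tau k j g)
    (hx0 : ∀ k l j g, k ≠ l → k ≠ l + 1 → d l g (x k j) = 0)
    (hX : ∀ (u : X) (r : ℝ), 0 ≤ r → (∀ k g, ‖d k g u‖ ≤ r) → ‖u‖ ≤ r)
    (hdense : ∀ u, u ∈ closure
      ((Submodule.span ℂ (Set.range (fun ω : Σ k, I k => x ω.1 ω.2)) : Submodule ℂ X) : Set X)) :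
    ∃ A : SepBanachAlgebra,
      (∀ x y : A.carrier, x * y = y * x) ∧
      ¬ ∃ φ : A.carrier →ₙₐ[ℂ] B.carrier,
        Function.Injective φ ∧
        (∃ C : ℝ, ∀ a : A.carrier, ‖φ a‖ ≤ C * ‖a‖) ∧
        (∃ c : ℝ, 0 < c ∧ ∀ a : A.carrier, c * ‖a‖ ≤ ‖φ a‖) := by
  let Q : X →ₗ[ℂ] (X →L[ℂ] ℂ) →ₗ[ℂ] ℂ := LinearMap.mk₂ ℂ (fun x y => y x)
    (by intros; simp) (by intros; simp) (by intros; simp) (by intros; simp)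
  have hQ : ∀ x y, ‖Q x y‖ ≤ ‖x‖ * ‖y‖ := fun x y => by
    have := y.le_opNorm x
    rw [mul_comm] at this
    exact this
  have hd1 : ∀ k g u, ‖d k g u‖ ≤ 1 * ‖u‖ := fun k g u => by
    rw [one_mul]
    exact hd k g u
  refine enfloX B Q hQ I G sig tau hs1 ht1 hss htt hst δ hδ hδ0
    hanti h3 h4 x (fun k g => LinearMap.mkContinuous (d k g) 1 (hd1 k g))
    (fun k g => LinearMap.mkContinuous_norm_le _ zero_le_one _) hxs hxt hx0 hX ?_
  intro y hy
  have hle : (Submodule.span ℂ (Set.range (fun ω : Σ k, I k => x ω.1 ω.2))).topologicalClosure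
      ≤ LinearMap.ker y.toLinearMap := by
    apply Submodule.topologicalClosure_minimal
    · rw [Submodule.span_le]
      rintro _ ⟨⟨k, j⟩, rfl⟩
      exact hy k j
    · exact ContinuousLinearMap.isClosed_ker y
  ext u
  exact hle (hdense u)

/-- The values of the vectors. -/
noncomputable def vval (I G : ℕ → Type) (sig : ∀ k, I k → G k → ℂ)
    (tau : ∀ k, I (k + 1) → G k → ℂ) (k : ℕ) (j : I k) (ω : Σ l, G l) : ℂ :=
  if h : k = ω.1 then sig ω.1 (h ▸ j) ω.2 else
    if h' : k = ω.1 + 1 then tau ω.1 (h' ▸ j) ω.2 else 0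

lemma enflo (B : SepBanachAlgebra)
    (I G : ℕ → Type) [∀ k, Fintype (I k)] [∀ k, Nonempty (I k)] [∀ k, DecidableEq (I k)]
    [∀ k, Fintype (G k)] [∀ k, Nonempty (G k)]
    (sig : ∀ k, I k → G k → ℂ) (tau : ∀ k, I (k + 1) → G k → ℂ)
    (hs1 : ∀ k j g, ‖sig k j g‖ = 1) (ht1 : ∀ k j g, ‖tau k j g‖ = 1)
    (hss : ∀ k i j, ∑ g, conj (sig k i g) * sig k j g = if i = j then (Fintype.card (G k) : ℂ) else 0)
    (htt : ∀ k i j, ∑ g, conj (tau k i g) * tau k j g = if i = j then (Fintype.card (G k) : ℂ) else 0)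
    (hst : ∀ k i j, ∑ g, conj (sig k i g) * tau k j g = 0)
    (δ : ℕ → ℝ) (hδ : Summable δ) (hδ0 : ∀ k, 0 ≤ δ k) (hanti : Antitone δ)
    (h3 : ∀ k g h, ‖(Fintype.card (I (k + 1)) : ℂ)⁻¹ * ∑ j, conj (tau k j g) * tau k j h -
      (Fintype.card (I k) : ℂ)⁻¹ * ∑ j, conj (sig k j g) * sig k j h‖ ≤ δ k)
    (h4 : ∀ k g h, ‖(Fintype.card (I (k + 1)) : ℂ)⁻¹ * ∑ j, conj (tau k j g) * sig (k + 1) j h‖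
      ≤ δ (k + 1)) :
    ∃ A : SepBanachAlgebra,
      (∀ x y : A.carrier, x * y = y * x) ∧
      ¬ ∃ φ : A.carrier →ₙₐ[ℂ] B.carrier,
        Function.Injective φ ∧
        (∃ C : ℝ, ∀ a : A.carrier, ‖φ a‖ ≤ C * ‖a‖) ∧
        (∃ c : ℝ, 0 < c ∧ ∀ a : A.carrier, c * ‖a‖ ≤ ‖φ a‖) := by
  have vs : ∀ k j g, vval I G sig tau k j ⟨k, g⟩ = sig k j g := by
    intro k j g
    simp [vval]
  have vt : ∀ k j g, vval I G sig tau (k + 1) j ⟨k, g⟩ = tau k j g := by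
    intro k j g
    simp [vval]
  have v0 : ∀ k l j g, k ≠ l → k ≠ l + 1 → vval I G sig tau k j ⟨l, g⟩ = 0 := by
    intro k l j g h h'
    simp [vval, h, h']
  have v1 : ∀ k j ω, ‖vval I G sig tau k j ω‖ ≤ 1 := by
    rintro k j ⟨l, g⟩
    by_cases h : k = l
    · subst h
      rw [vs, hs1]
    · by_cases h' : k = l + 1
      · subst h'
        rw [vt, ht1]
      · rw [v0 _ _ _ _ h h', norm_zero]
        exact zero_le_one
  let x0 : ∀ k, I k → lp (fun _ : (Σ l, G l) => ℂ) ⊤ := fun k j =>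
    ⟨vval I G sig tau k j, memℓp_infty ⟨1, by rintro _ ⟨ω, rfl⟩; exact v1 k j ω⟩⟩
  let S : Set (lp (fun _ : (Σ l, G l) => ℂ) ⊤) := Set.range (fun ω : Σ k, I k => x0 ω.1 ω.2)
  obtain ⟨X, hXd⟩ : ∃ X : Submodule ℂ (lp (fun _ : (Σ l, G l) => ℂ) ⊤),
      X = (Submodule.span ℂ S).topologicalClosure := ⟨_, rfl⟩
  have i1 : CompleteSpace X := by
    rw [hXd]
    exact (Submodule.isClosed_topologicalClosure _).completeSpace_coe
  have i2 : TopologicalSpace.SeparableSpace X := by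
    rw [hXd]
    exact isSeparable_closure_sub S (Set.countable_range _)
  have hm : ∀ k g, x0 k g ∈ X := fun k g => by
    rw [hXd]
    exact Submodule.le_topologicalClosure _ (Submodule.subset_span ⟨⟨k, g⟩, rfl⟩)
  let d : ∀ k, G k → X →ₗ[ℂ] ℂ := fun k g =>
    { toFun := fun u => (u : lp (fun _ : (Σ l, G l) => ℂ) ⊤) ⟨k, g⟩
      map_add' := fun u v => rfl
      map_smul' := fun c v => rfl }
  refine enfloX2 B I G sig tau hs1 ht1 hss htt hst δ hδ hδ0
    hanti h3 h4 (fun k j => (⟨x0 k j, hm k j⟩ : X)) d ?_ vs vt v0 ?_ ?_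
  · intro k g u
    exact lp.norm_apply_le_norm (by simp) (u : lp (fun _ : (Σ l, G l) => ℂ) ⊤) ⟨k, g⟩
  · intro u r hr h
    exact lp.norm_le_of_forall_le hr (fun ω => h ω.1 ω.2)
  · rintro ⟨u, hu⟩
    have hu' : u ∈ closure ((Submodule.span ℂ S : Submodule ℂ _) : Set (lp (fun _ : (Σ l, G l) => ℂ) ⊤)) := by
      rw [hXd] at hu
      exact hu
    rw [closure_subtype]
    have himg : (Subtype.val '' ((Submodule.span ℂ (Set.range (fun ω : Σ k, I k =>
        (⟨x0 ω.1 ω.2, hm ω.1 ω.2⟩ : X))) : Submodule ℂ X) : Set X)) =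
        ((Submodule.span ℂ S : Submodule ℂ _) : Set (lp (fun _ : (Σ l, G l) => ℂ) ⊤)) := by
      have := Submodule.map_span X.subtype (Set.range (fun ω : Σ k, I k =>
        (⟨x0 ω.1 ω.2, hm ω.1 ω.2⟩ : X)))
      rw [← Set.range_comp] at this
      exact congrArg (fun W : Submodule ℂ _ => (W : Set (lp (fun _ : (Σ l, G l) => ℂ) ⊤))) this
    rw [himg]
    exact hu'

end partC2
section partC3

open ComplexConjugate

variable {R : Type} [CommRing R] [Fintype R] [DecidableEq R]

lemma csum (ψ : AddChar R ℂ) (hψ : ψ.IsPrimitive) (t : R) :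
    ∑ b, ψ (b * t) = if t = 0 then (Fintype.card R : ℂ) else 0 := by
  rw [AddChar.sum_mulShift t hψ]
  push_cast
  rfl

lemma cnorm (ψ : AddChar R ℂ) (t : R) : ‖ψ t‖ = 1 := AddChar.norm_apply ψ t

lemma cconj (ψ : AddChar R ℂ) (t : R) : conj (ψ t) = ψ (-t) := (AddChar.map_neg_eq_conj ψ t).symm

/-- basic chirp function -/
noncomputable def sfun (ψ : AddChar R ℂ) (m : ZMod 5 → R) (i : R × R) (g : ZMod 5 × R × R) : ℂ :=
  ψ (m g.1 * i.1 ^ 2 + g.2.1 * i.1 + g.2.2 * i.2)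

lemma sfun_norm (ψ : AddChar R ℂ) (m : ZMod 5 → R) (i : R × R) (g : ZMod 5 × R × R) :
    ‖sfun ψ m i g‖ = 1 := cnorm _ _

lemma sfun_orth (ψ : AddChar R ℂ) (hψ : ψ.IsPrimitive) (m : ZMod 5 → R) (θ : ZMod 5 → ℂ)
    (i j : R × R) :
    ∑ g : ZMod 5 × R × R, θ g.1 * (conj (sfun ψ m i g) * sfun ψ m j g) =
      if i = j then (∑ a, θ a) * (Fintype.card R * Fintype.card R) else 0 := by
  have h : ∀ (a : ZMod 5) (b b' : R), θ a * (conj (sfun ψ m i (a, b, b')) * sfun ψ m j (a, b, b')) =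
      (θ a * ψ (m a * (j.1 ^ 2 - i.1 ^ 2))) * (ψ (b * (j.1 - i.1)) * ψ (b' * (j.2 - i.2))) := by
    intro a b b'
    simp only [sfun]
    rw [cconj, ← AddChar.map_add_eq_mul, mul_assoc (θ a), ← AddChar.map_add_eq_mul,
      ← AddChar.map_add_eq_mul]
    congr 2
    ring
  simp only [Fintype.sum_prod_type, h, ← Finset.mul_sum]
  simp only [csum ψ hψ, ← Finset.sum_mul]
  obtain ⟨u, v⟩ := i
  obtain ⟨u2, v2⟩ := j
  simp only [Prod.mk.injEq, sub_eq_zero]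
  by_cases h1 : u2 = u
  · subst h1
    by_cases h2 : v2 = v
    · subst h2
      simp
    · simp [h2, Ne.symm h2]
  · simp [h1, Ne.symm h1]

lemma gauss_bound (ψ : AddChar R ℂ) (hψ : ψ.IsPrimitive) (α β : R) (n : ℕ)
    (hn : (Finset.univ.filter (fun h : R => 2 * α * h = 0)).card ≤ n) :
    ‖∑ u, ψ (α * u ^ 2 + β * u)‖ ^ 2 ≤ Fintype.card R * n := by
  have e : ((‖∑ u, ψ (α * u ^ 2 + β * u)‖ ^ 2 : ℝ) : ℂ) =
      ∑ h, (ψ (α * h ^ 2 + β * h) * if 2 * α * h = 0 then (Fintype.card R : ℂ) else 0) := by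
    rw [← Complex.normSq_eq_norm_sq, Complex.normSq_eq_conj_mul_self, map_sum, Finset.sum_mul]
    have : ∀ w : R, conj (ψ (α * w ^ 2 + β * w)) * ∑ u, ψ (α * u ^ 2 + β * u) =
        ∑ h, ψ (α * h ^ 2 + β * h) * ψ (w * (2 * α * h)) := by
      intro w
      rw [← Equiv.sum_comp (Equiv.addRight w), Finset.mul_sum]
      refine Finset.sum_congr rfl fun h _ => ?_
      rw [cconj, ← AddChar.map_add_eq_mul, ← AddChar.map_add_eq_mul, Equiv.coe_addRight]
      congr 1
      ring
    simp only [this]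
    rw [Finset.sum_comm]
    simp only [← Finset.mul_sum, csum ψ hψ]
  have e2 : ‖∑ u, ψ (α * u ^ 2 + β * u)‖ ^ 2 = ‖((‖∑ u, ψ (α * u ^ 2 + β * u)‖ ^ 2 : ℝ) : ℂ)‖ := by
    rw [Complex.norm_real, Real.norm_eq_abs, abs_of_nonneg (by positivity)]
  rw [e2, e]
  calc _ ≤ ∑ h : R, (if 2 * α * h = 0 then (Fintype.card R : ℝ) else 0) := by
        refine norm_sum_le_of_le _ fun h _ => ?_
        rw [norm_mul, cnorm, one_mul]
        split_ifs <;> simp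
    _ = Fintype.card R * (Finset.univ.filter (fun h : R => 2 * α * h = 0)).card := by
        rw [← Finset.sum_filter, Finset.sum_const, nsmul_eq_mul, mul_comm]
    _ ≤ _ := by
        gcongr

lemma sfun_kernel (ψ : AddChar R ℂ) (hψ : ψ.IsPrimitive) (m : ZMod 5 → R) (n : ℕ)
    (g h : ZMod 5 × R × R)
    (hn : (Finset.univ.filter (fun u : R => 2 * (m h.1 - m g.1) * u = 0)).card ≤ n) :
    ‖∑ i, conj (sfun ψ m i g) * sfun ψ m i h‖ ^ 2 ≤ (Fintype.card R : ℝ) ^ 3 * n := by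
  obtain ⟨a, b, b'⟩ := g
  obtain ⟨a2, b2, b2'⟩ := h
  have h : ∀ u v : R, conj (sfun ψ m (u, v) (a, b, b')) * sfun ψ m (u, v) (a2, b2, b2') =
      ψ ((m a2 - m a) * u ^ 2 + (b2 - b) * u) * ψ ((b2' - b') * v) := by
    intro u v
    simp only [sfun]
    rw [cconj, ← AddChar.map_add_eq_mul, ← AddChar.map_add_eq_mul]
    congr 1
    ring
  simp only [Fintype.sum_prod_type, h, ← Finset.mul_sum, ← Finset.sum_mul]
  rw [norm_mul, mul_pow]
  have h1 := gauss_bound ψ hψ (m a2 - m a) (b2 - b) n hn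
  have h2 : ‖∑ v, ψ ((b2' - b') * v)‖ ≤ Fintype.card R := by
    calc _ ≤ ∑ v : R, (1 : ℝ) := norm_sum_le_of_le _ fun v _ => (cnorm _ _).le
      _ = _ := by simp
  calc _ ≤ (Fintype.card R * n : ℝ) * (Fintype.card R : ℝ) ^ 2 := by gcongr
    _ = _ := by ring

lemma bilin_bound (ψ : AddChar R ℂ) (hψ : ψ.IsPrimitive) (F H : R → ℂ) (hF : ∀ u, ‖F u‖ = 1)
    (hH : ∀ u, ‖H u‖ = 1) :
    ‖∑ u, ∑ v, conj (ψ (u * v)) * (F u * H v)‖ ^ 2 ≤ (Fintype.card R : ℝ) ^ 3 := by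
  have e0 : ∑ u, ∑ v, conj (ψ (u * v)) * (F u * H v) =
      ∑ u, F u * ∑ v, ψ (-(u * v)) * H v := by
    refine Finset.sum_congr rfl fun u _ => ?_
    rw [Finset.mul_sum]
    refine Finset.sum_congr rfl fun v _ => ?_
    rw [cconj]
    ring
  have e1 : ∑ u, ‖∑ v, ψ (-(u * v)) * H v‖ ^ 2 = (Fintype.card R : ℝ) ^ 2 := by
    have : ((∑ u, ‖∑ v, ψ (-(u * v)) * H v‖ ^ 2 : ℝ) : ℂ) = ((Fintype.card R : ℝ) ^ 2 : ℝ) := by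
      push_cast
      have : ∀ u, (‖∑ v, ψ (-(u * v)) * H v‖ : ℂ) ^ 2 =
          ∑ w, ∑ v, (conj (H w) * H v) * ψ (u * (w - v)) := by
        intro u
        rw [← Complex.ofReal_pow, ← Complex.normSq_eq_norm_sq, Complex.normSq_eq_conj_mul_self,
          map_sum, Finset.sum_mul]
        refine Finset.sum_congr rfl fun w _ => ?_
        rw [Finset.mul_sum]
        refine Finset.sum_congr rfl fun v _ => ?_
        rw [map_mul, cconj, mul_sub, sub_eq_add_neg, AddChar.map_add_eq_mul, neg_neg]
        ring
      simp only [this]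
      rw [Finset.sum_comm]
      have : ∀ w : R, ∑ u, ∑ v, (conj (H w) * H v) * ψ (u * (w - v)) = Fintype.card R := by
        intro w
        rw [Finset.sum_comm]
        simp only [← Finset.mul_sum, csum ψ hψ, sub_eq_zero]
        simp only [mul_ite, mul_zero, Finset.sum_ite_eq, Finset.mem_univ, if_true]
        rw [← Complex.normSq_eq_conj_mul_self, Complex.normSq_eq_norm_sq, hH]
        simp
      simp only [this]
      simp [sq]
    exact_mod_cast this
  rw [e0]
  have h1 : ‖∑ u, F u * ∑ v, ψ (-(u * v)) * H v‖ ≤ ∑ u, 1 * ‖∑ v, ψ (-(u * v)) * H v‖ := by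
    refine norm_sum_le_of_le _ fun u _ => ?_
    rw [norm_mul, hF]
  calc _ ≤ (∑ u, 1 * ‖∑ v, ψ (-(u * v)) * H v‖) ^ 2 := by gcongr
    _ ≤ (∑ u : R, (1 : ℝ) ^ 2) * ∑ u, ‖∑ v, ψ (-(u * v)) * H v‖ ^ 2 :=
      Finset.sum_mul_sq_le_sq_mul_sq _ _ _
    _ = _ := by
      rw [e1]
      simp
      ring

end partC3
section partC4

open ComplexConjugate

/-- character on the five element group -/
noncomputable def chi (a : ZMod 5) : ℂ := ZMod.stdAddChar a

/-- index map -/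
def nn (c d : Fin 2) : ZMod 5 := 1 + ((c : ℕ) : ZMod 5) + 2 * ((d : ℕ) : ZMod 5)

lemma nn_inj : ∀ c d c' d' : Fin 2, nn c d = nn c' d' → c = c' ∧ d = d' := by
  unfold nn
  decide

lemma nn_ne : ∀ c d : Fin 2, nn c d ≠ 0 := by
  unfold nn
  decide

lemma chi_sum (t : ZMod 5) : ∑ a, chi (t * a) = if t = 0 then 5 else 0 := by
  have := csum (ZMod.stdAddChar (N := 5)) (ZMod.isPrimitive_stdAddChar 5) t
  simp only [chi, mul_comm t]
  rw [this]
  simp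

lemma chi_norm (t : ZMod 5) : ‖chi t‖ = 1 := cnorm _ _

lemma chi_conj (t : ZMod 5) : conj (chi t) = chi (-t) := cconj _ _

lemma chi_add (s t : ZMod 5) : chi (s + t) = chi s * chi t := AddChar.map_add_eq_mul _ _ _

lemma chi_zero : chi 0 = 1 := AddChar.map_zero_eq_one _

variable {R R' : Type} [CommRing R] [Fintype R] [DecidableEq R] [CommRing R'] [Fintype R']
  [DecidableEq R']

/-- linking function -/
noncomputable def tfun (ψ : AddChar R ℂ) (ψ' : AddChar R' ℂ) (m : ZMod 5 → R)
    (e : R' ≃ Fin 2 × R) (i : R' × R') (g : ZMod 5 × R × R) : ℂ :=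
  ψ' (i.1 * i.2) * (chi (nn (e i.1).1 (e i.2).1 * g.1) * sfun ψ m ((e i.1).2, (e i.2).2) g)

lemma tfun_norm (ψ : AddChar R ℂ) (ψ' : AddChar R' ℂ) (m : ZMod 5 → R)
    (e : R' ≃ Fin 2 × R) (i : R' × R') (g : ZMod 5 × R × R) : ‖tfun ψ ψ' m e i g‖ = 1 := by
  rw [tfun, norm_mul, norm_mul, cnorm, chi_norm, sfun_norm]
  norm_num

lemma sfun_ss (ψ : AddChar R ℂ) (hψ : ψ.IsPrimitive) (m : ZMod 5 → R) (i j : R × R) :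
    ∑ g : ZMod 5 × R × R, conj (sfun ψ m i g) * sfun ψ m j g =
      if i = j then (Fintype.card (ZMod 5 × R × R) : ℂ) else 0 := by
  have := sfun_orth ψ hψ m (fun _ => 1) i j
  simp only [one_mul] at this
  rw [this]
  simp

lemma sfun_st (ψ : AddChar R ℂ) (hψ : ψ.IsPrimitive) (ψ' : AddChar R' ℂ) (m : ZMod 5 → R)
    (e : R' ≃ Fin 2 × R) (i : R × R) (j : R' × R') :
    ∑ g : ZMod 5 × R × R, conj (sfun ψ m i g) * tfun ψ ψ' m e j g = 0 := by
  have := sfun_orth ψ hψ m (fun a => chi (nn (e j.1).1 (e j.2).1 * a)) i ((e j.1).2, (e j.2).2)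
  have h2 : ∀ g : ZMod 5 × R × R, conj (sfun ψ m i g) * tfun ψ ψ' m e j g =
      ψ' (j.1 * j.2) * (chi (nn (e j.1).1 (e j.2).1 * g.1) *
        (conj (sfun ψ m i g) * sfun ψ m ((e j.1).2, (e j.2).2) g)) := by
    intro g
    rw [tfun]
    ring
  simp only [h2, ← Finset.mul_sum]
  rw [this, chi_sum, if_neg (nn_ne _ _)]
  simp

lemma sfun_tt (ψ : AddChar R ℂ) (hψ : ψ.IsPrimitive) (ψ' : AddChar R' ℂ) (m : ZMod 5 → R)
    (e : R' ≃ Fin 2 × R) (i : R' × R') (j : R' × R') :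
    ∑ g : ZMod 5 × R × R, conj (tfun ψ ψ' m e i g) * tfun ψ ψ' m e j g =
      if i = j then (Fintype.card (ZMod 5 × R × R) : ℂ) else 0 := by
  have := sfun_orth ψ hψ m
    (fun a => chi ((nn (e j.1).1 (e j.2).1 - nn (e i.1).1 (e i.2).1) * a))
    ((e i.1).2, (e i.2).2) ((e j.1).2, (e j.2).2)
  have h2 : ∀ g : ZMod 5 × R × R, conj (tfun ψ ψ' m e i g) * tfun ψ ψ' m e j g =
      (conj (ψ' (i.1 * i.2)) * ψ' (j.1 * j.2)) *
      (chi ((nn (e j.1).1 (e j.2).1 - nn (e i.1).1 (e i.2).1) * g.1) *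
        (conj (sfun ψ m ((e i.1).2, (e i.2).2) g) * sfun ψ m ((e j.1).2, (e j.2).2) g)) := by
    intro g
    rw [tfun, tfun, sub_mul, sub_eq_add_neg, chi_add, ← chi_conj]
    simp only [map_mul]
    ring
  simp only [h2, ← Finset.mul_sum]
  rw [this, chi_sum]
  by_cases hij : i = j
  · subst hij
    rw [cconj, ← AddChar.map_add_eq_mul]
    simp
  · rw [if_neg hij]
    by_cases h1 : ((e i.1).2, (e i.2).2) = ((e j.1).2, (e j.2).2)
    · have h3 : nn (e j.1).1 (e j.2).1 - nn (e i.1).1 (e i.2).1 ≠ 0 := by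
        intro h
        rw [sub_eq_zero] at h
        obtain ⟨h4, h5⟩ := nn_inj _ _ _ _ h
        obtain ⟨h6, h7⟩ := Prod.mk.inj h1
        exact hij (Prod.ext (e.injective (Prod.ext h4.symm h6)) (e.injective (Prod.ext h5.symm h7)))
      rw [if_neg h3]
      simp
    · rw [if_neg h1, mul_zero]

lemma tfun_kernel (ψ : AddChar R ℂ) (hψ : ψ.IsPrimitive) (ψ' : AddChar R' ℂ) (m : ZMod 5 → R)
    (e : R' ≃ Fin 2 × R) (n : ℕ) (g h : ZMod 5 × R × R)
    (hn : h.1 ≠ g.1 →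
      (Finset.univ.filter (fun u : R => 2 * (m h.1 - m g.1) * u = 0)).card ≤ n) :
    ‖(Fintype.card (R' × R') : ℂ)⁻¹ * ∑ j, conj (tfun ψ ψ' m e j g) * tfun ψ ψ' m e j h -
      (Fintype.card (R × R) : ℂ)⁻¹ * ∑ j, conj (sfun ψ m j g) * sfun ψ m j h‖ ^ 2 ≤
      4 * n / Fintype.card R := by
  have hR : (0 : ℝ) < Fintype.card R := by exact_mod_cast Fintype.card_pos
  have hRC : (Fintype.card R : ℂ) ≠ 0 := by exact_mod_cast Fintype.card_ne_zero
  have hR' : Fintype.card R' = 2 * Fintype.card R := by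
    rw [Fintype.card_congr e, Fintype.card_prod, Fintype.card_fin]
  set S : ℂ := ∑ j, conj (sfun ψ m j g) * sfun ψ m j h with hS
  have h1 : ∑ j, conj (tfun ψ ψ' m e j g) * tfun ψ ψ' m e j h =
      (∑ c : Fin 2, ∑ d : Fin 2, chi (nn c d * (h.1 - g.1))) * S := by
    let Φ : (Fin 2 × R) × (Fin 2 × R) → ℂ := fun p => chi (nn p.1.1 p.2.1 * (h.1 - g.1)) *
      (conj (sfun ψ m (p.1.2, p.2.2) g) * sfun ψ m (p.1.2, p.2.2) h)
    have h2 : ∀ j : R' × R', conj (tfun ψ ψ' m e j g) * tfun ψ ψ' m e j h =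
        Φ ((e.prodCongr e) j) := by
      intro j
      have h5 : conj (ψ' (j.1 * j.2)) * ψ' (j.1 * j.2) = 1 := by
        rw [cconj, ← AddChar.map_add_eq_mul]
        simp
      simp only [Φ, Equiv.prodCongr_apply, Prod.map]
      rw [tfun, tfun, mul_sub, sub_eq_add_neg, chi_add, ← chi_conj]
      simp only [map_mul]
      linear_combination (conj (chi (nn (e j.1).1 (e j.2).1 * g.1)) *
        conj (sfun ψ m ((e j.1).2, (e j.2).2) g) * chi (nn (e j.1).1 (e j.2).1 * h.1) *
        sfun ψ m ((e j.1).2, (e j.2).2) h) * h5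
    rw [Finset.sum_congr rfl (fun j _ => h2 j)]
    refine (Equiv.sum_comp (e.prodCongr e) Φ).trans ?_
    rw [hS]
    simp only [Φ, Fintype.sum_prod_type, Finset.sum_mul]
    refine Finset.sum_congr rfl fun c _ => ?_
    rw [Finset.sum_comm]
    refine Finset.sum_congr rfl fun d _ => ?_
    simp only [Finset.mul_sum]
  rw [h1]
  set T : ℂ := ∑ c : Fin 2, ∑ d : Fin 2, chi (nn c d * (h.1 - g.1)) with hT
  have e1 : (Fintype.card (R' × R') : ℂ)⁻¹ * (T * S) - (Fintype.card (R × R) : ℂ)⁻¹ * S =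
      (T / 4 - 1) * (S / (Fintype.card R : ℂ) ^ 2) := by
    rw [Fintype.card_prod, Fintype.card_prod, hR']
    push_cast
    field_simp
    ring
  rw [e1]
  by_cases hg : h.1 = g.1
  · have : T = 4 := by
      rw [hT, hg]
      simp [chi_zero]
      norm_num
    rw [this]
    norm_num
    positivity
  · have hk := sfun_kernel ψ hψ m n g h (hn hg)
    rw [← hS] at hk
    have hT4 : ‖T‖ ≤ 4 := by
      calc ‖T‖ ≤ ∑ c : Fin 2, ∑ d : Fin 2, (1 : ℝ) :=
            norm_sum_le_of_le _ fun c _ => norm_sum_le_of_le _ fun d _ => (chi_norm _).le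
        _ = 4 := by
            simp
            norm_num
    have hT2 : ‖T / 4 - 1‖ ≤ 2 := by
      calc ‖T / 4 - 1‖ ≤ ‖T / 4‖ + ‖(1 : ℂ)‖ := norm_sub_le _ _
        _ ≤ 2 := by
          rw [norm_div, norm_one]
          have : ‖(4 : ℂ)‖ = 4 := by simp
          rw [this]
          linarith
    rw [norm_mul, norm_div, norm_pow, Complex.norm_natCast, mul_pow, div_pow]
    calc _ ≤ (2 : ℝ) ^ 2 * (((Fintype.card R : ℝ) ^ 3 * n) / ((Fintype.card R : ℝ) ^ 2) ^ 2) := by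
          gcongr
      _ = _ := by
          field_simp
          ring

lemma tfun_cross (ψ : AddChar R ℂ) (ψ' : AddChar R' ℂ) (hψ' : ψ'.IsPrimitive) (m : ZMod 5 → R)
    (m' : ZMod 5 → R')
    (e : R' ≃ Fin 2 × R) (g : ZMod 5 × R × R) (h : ZMod 5 × R' × R') :
    ‖(Fintype.card (R' × R') : ℂ)⁻¹ * ∑ j, conj (tfun ψ ψ' m e j g) * sfun ψ' m' j h‖ ^ 2 ≤
      1 / Fintype.card R' := by
  have hR : (0 : ℝ) < Fintype.card R' := by exact_mod_cast Fintype.card_pos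
  let F : R' → ℂ := fun u => conj (chi ((1 + ((e u).1 : ℕ)) * g.1)) *
    conj (ψ (m g.1 * (e u).2 ^ 2 + g.2.1 * (e u).2)) * ψ' (m' h.1 * u ^ 2 + h.2.1 * u)
  let H : R' → ℂ := fun v => conj (chi ((2 * ((e v).1 : ℕ)) * g.1)) *
    conj (ψ (g.2.2 * (e v).2)) * ψ' (h.2.2 * v)
  have h1 : ∑ j, conj (tfun ψ ψ' m e j g) * sfun ψ' m' j h =
      ∑ u, ∑ v, conj (ψ' (u * v)) * (F u * H v) := by
    rw [Fintype.sum_prod_type]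
    refine Finset.sum_congr rfl fun u _ => Finset.sum_congr rfl fun v _ => ?_
    simp only [tfun, sfun, F, H, nn, add_mul _ _ g.1, chi_add, map_mul, AddChar.map_add_eq_mul]
    ring
  have hF : ∀ u, ‖F u‖ = 1 := by
    intro u
    simp only [F, norm_mul, RCLike.norm_conj, cnorm, chi_norm, mul_one]
  have hH : ∀ u, ‖H u‖ = 1 := by
    intro u
    simp only [H, norm_mul, RCLike.norm_conj, cnorm, chi_norm, mul_one]
  have hb := bilin_bound ψ' hψ' F H hF hH
  rw [h1, norm_mul, norm_inv, Complex.norm_natCast, mul_pow, Fintype.card_prod]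
  push_cast
  calc _ ≤ ((Fintype.card R' * Fintype.card R' : ℝ)⁻¹) ^ 2 * (Fintype.card R' : ℝ) ^ 3 := by gcongr
    _ = _ := by
      field_simp

lemma card_two_mul (k : ℕ) (a b : ZMod 5) (hab : b ≠ a) :
    (Finset.univ.filter (fun u : ZMod (2 ^ k) =>
      2 * (((b.val : ℕ) : ZMod (2 ^ k)) - ((a.val : ℕ) : ZMod (2 ^ k))) * u = 0)).card ≤ 8 := by
  have key : ∀ t : ℕ, 0 < t → t ≤ 8 →
      (Finset.univ.filter (fun u : ZMod (2 ^ k) => t • u = 0)).card ≤ 8 := fun t h1 h2 =>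
    (IsAddCyclic.card_nsmul_eq_zero_le h1).trans h2
  have hb := b.val_lt
  have ha := a.val_lt
  have hne : b.val ≠ a.val := fun h => hab (ZMod.val_injective 5 h)
  rcases lt_or_gt_of_ne hne with h | h
  · obtain ⟨t, ht⟩ := Nat.exists_eq_add_of_lt h
    refine (Finset.card_le_card ?_).trans (key (2 * (t + 1)) (by omega) (by omega))
    intro u hu
    simp only [Finset.mem_filter, Finset.mem_univ, true_and] at hu ⊢
    rw [ht] at hu
    push_cast at hu
    rw [nsmul_eq_mul]
    push_cast
    linear_combination -hu
  · obtain ⟨t, ht⟩ := Nat.exists_eq_add_of_lt h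
    refine (Finset.card_le_card ?_).trans (key (2 * (t + 1)) (by omega) (by omega))
    intro u hu
    simp only [Finset.mem_filter, Finset.mem_univ, true_and] at hu ⊢
    rw [ht] at hu
    push_cast at hu
    rw [nsmul_eq_mul]
    push_cast
    linear_combination hu

end partC4

lemma le_of_sq_le_sq_aux (a b : ℝ) (hb : 0 ≤ b) (h : a ^ 2 ≤ b ^ 2) : a ≤ b :=
  (le_abs_self a).trans (abs_le_of_sq_le_sq h hb)

/-- There is no separable complex Banach algebra `B` such that every separable
complex Banach algebra `A` admits a bounded homomorphic embedding into `B`: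
for every separable Banach algebra `B` there is a separable Banach algebra `A`
— which can moreover be chosen with commutative multiplication — such that no
injective bounded algebra homomorphism `φ : A → B` is bounded below. -/
theorem no_universal_separable_Banach_algebra_bounded
    (B : SepBanachAlgebra) :
    ∃ A : SepBanachAlgebra,
      (∀ x y : A.carrier, x * y = y * x) ∧
      ¬ ∃ φ : A.carrier →ₙₐ[ℂ] B.carrier,
        Function.Injective φ ∧
        (∃ C : ℝ, ∀ a : A.carrier, ‖φ a‖ ≤ C * ‖a‖) ∧
        (∃ c : ℝ, 0 < c ∧ ∀ a : A.carrier, c * ‖a‖ ≤ ‖φ a‖) := by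
  have he : ∀ k : ℕ, Nonempty (ZMod (2 ^ (k + 1)) ≃ Fin 2 × ZMod (2 ^ k)) := by
    intro k
    refine ⟨Fintype.equivOfCardEq ?_⟩
    simp only [ZMod.card, Fintype.card_prod, Fintype.card_fin]
    ring
  have e := fun k => (he k).some
  let ψ : ∀ k : ℕ, AddChar (ZMod (2 ^ k)) ℂ := fun k => ZMod.stdAddChar
  have hψ : ∀ k, (ψ k).IsPrimitive := fun k => ZMod.isPrimitive_stdAddChar _
  let m : ∀ k : ℕ, ZMod 5 → ZMod (2 ^ k) := fun k a => ((a.val : ℕ) : ZMod (2 ^ k))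
  have hpow : ∀ k : ℕ, (1 : ℝ) / 2 ^ k ≤ (9 / 16) ^ k := fun k => by
    rw [← one_div_pow]
    exact pow_le_pow_left₀ (by norm_num) (by norm_num) k
  have hsq : ∀ k : ℕ, ((6 : ℝ) * (3 / 4) ^ k) ^ 2 = 36 * (9 / 16) ^ k := fun k => by
    rw [mul_pow, ← pow_mul, mul_comm k 2, pow_mul]
    norm_num
  refine enflo B (fun k => ZMod (2 ^ k) × ZMod (2 ^ k))
    (fun k => ZMod 5 × ZMod (2 ^ k) × ZMod (2 ^ k))
    (fun k => sfun (ψ k) (m k)) (fun k => tfun (ψ k) (ψ (k + 1)) (m k) (e k))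
    (fun k j g => sfun_norm _ _ _ _) (fun k j g => tfun_norm _ _ _ _ _ _)
    (fun k i j => sfun_ss _ (hψ k) _ _ _) (fun k i j => sfun_tt _ (hψ k) _ _ _ _ _)
    (fun k i j => sfun_st _ (hψ k) _ _ _ _ _) (fun k => 6 * (3 / 4) ^ k) ?_ ?_ ?_ ?_ ?_
  · exact (summable_geometric_of_lt_one (by norm_num) (by norm_num)).mul_left 6
  · intro k
    positivity
  · intro k l hkl
    have : ((3 : ℝ) / 4) ^ l ≤ (3 / 4) ^ k :=
      pow_le_pow_of_le_one (by norm_num) (by norm_num) hkl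
    change (6 : ℝ) * (3 / 4) ^ l ≤ 6 * (3 / 4) ^ k
    linarith
  · intro k g h
    have := tfun_kernel (ψ k) (hψ k) (ψ (k + 1)) (m k) (e k) 8 g h
      (fun hne => card_two_mul k g.1 h.1 hne)
    refine le_of_sq_le_sq_aux _ _ (by positivity) ?_
    refine this.trans ?_
    rw [hsq, ZMod.card]
    have h1 := hpow k
    have h2 : (0 : ℝ) < 1 / 2 ^ k := by positivity
    push_cast
    calc (4 * 8 / 2 ^ k : ℝ) = 32 * (1 / 2 ^ k) := by ring
      _ ≤ _ := by linarith
  · intro k g h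
    have := tfun_cross (ψ k) (ψ (k + 1)) (hψ (k + 1)) (m k) (m (k + 1)) (e k) g h
    refine le_of_sq_le_sq_aux _ _ (by positivity) ?_
    refine this.trans ?_
    rw [hsq, ZMod.card]
    have h1 := hpow (k + 1)
    have h2 : (0 : ℝ) < 1 / 2 ^ (k + 1) := by positivity
    push_cast
    linarith
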